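/- arXiv:1309.4833 — 8 statements merged into one kernel-verified Lean document; each statement's English description precedes it below -/
import Mathlib

section
/- For every n ≥ 1, the tensor rank of the n-copy three-qubit W tensor W_n is at most C(n+2, 2) · 2^n, where C(n+2,2) is the binomial coefficient (n+2 choose 2). -/
/-- The unnormalized n-copy three-qubit W tensor: entry 1 at (i,j,k) if at every
position exactly one of the bits of i, j, k equals 1, and 0 otherwise. -/
noncomputable def Wtensor (n : ℕ) (i j k : Fin n → Bool) : ℂ :=
  if ∀ t, (if i t then 1 else 0) + (if j t then 1 else 0) + (if k t then (1 : ℕ) else 0) = 1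
  then 1 else 0

/-!
Exactly one of the three bits is set at every position if and only if at least one is set at every
position and the Hamming weights of the three strings add up to `n`. Hence the W tensor is the
entrywise product of two tensors. The first is the `n`-fold Kronecker power of the disjunction
tensor `1 - (1 - x) (1 - y) (1 - z)`, which has rank at most `2`. The second is a sum over the
`(n + 2).choose 2` ways of writing `n` as an ordered sum of three weights, each of which contributes
one product term. Rank is submultiplicative under entrywise products.
-/

open Finset

/-- The three-party tensor `T` is a sum of `r` product tensors, that is, its tensor rank is at most
`r`. The terms may vanish, so the predicate is monotone in `r`. -/
def TensorRankLE {R α β γ : Type*} [CommSemiring R] (T : α → β → γ → R) (r : ℕ) : Prop :=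
  ∃ (u : Fin r → α → R) (v : Fin r → β → R) (w : Fin r → γ → R),
    ∀ i j k, T i j k = ∑ t, u t i * v t j * w t k

namespace TensorRankLE

section CommSemiring

variable {R α β γ : Type*} [CommSemiring R]

theorem of_eq_sum {κ : Type*} [Fintype κ] {T : α → β → γ → R}
    (u : κ → α → R) (v : κ → β → R) (w : κ → γ → R)
    (hT : ∀ i j k, T i j k = ∑ s, u s i * v s j * w s k) : TensorRankLE T (Fintype.card κ) := by
  let e := (Fintype.equivFin κ).symm
  refine ⟨u ∘ e, v ∘ e, w ∘ e, fun i j k => ?_⟩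
  rw [hT]
  exact (e.sum_comp fun s => u s i * v s j * w s k).symm

theorem comp {α' β' γ' : Type*} {T : α → β → γ → R} {r : ℕ} (hT : TensorRankLE T r)
    (f : α' → α) (g : β' → β) (h : γ' → γ) :
    TensorRankLE (fun i j k => T (f i) (g j) (h k)) r :=
  let ⟨u, v, w, huvw⟩ := hT
  ⟨fun t => u t ∘ f, fun t => v t ∘ g, fun t => w t ∘ h, fun _ _ _ => huvw _ _ _⟩

theorem mul {S T : α → β → γ → R} {r s : ℕ} (hS : TensorRankLE S r) (hT : TensorRankLE T s) :
    TensorRankLE (fun i j k => S i j k * T i j k) (r * s) := by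
  obtain ⟨u, v, w, hS⟩ := hS
  obtain ⟨u', v', w', hT⟩ := hT
  have key := of_eq_sum (κ := Fin r × Fin s) (T := fun i j k => S i j k * T i j k)
    (fun p i => u p.1 i * u' p.2 i) (fun p j => v p.1 j * v' p.2 j)
    (fun p k => w p.1 k * w' p.2 k) fun i j k => by
      rw [hS, hT, sum_mul_sum, Fintype.sum_prod_type]
      exact sum_congr rfl fun _ _ => sum_congr rfl fun _ _ => by ring
  simpa only [Fintype.card_prod, Fintype.card_fin] using key

theorem prod_pi {ι : Type*} [Fintype ι] {A B C : ι → Type*}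
    {T : ∀ t, A t → B t → C t → R} {r : ι → ℕ} (hT : ∀ t, TensorRankLE (T t) (r t)) :
    TensorRankLE (fun (i : ∀ t, A t) (j : ∀ t, B t) (k : ∀ t, C t) => ∏ t, T t (i t) (j t) (k t))
      (∏ t, r t) := by
  classical
  choose u v w huvw using hT
  have key := of_eq_sum (κ := ∀ t, Fin (r t))
    (T := fun (i : ∀ t, A t) (j : ∀ t, B t) (k : ∀ t, C t) => ∏ t, T t (i t) (j t) (k t))
    (fun s i => ∏ t, u t (s t) (i t)) (fun s j => ∏ t, v t (s t) (j t))
    (fun s k => ∏ t, w t (s t) (k t)) fun i j k => by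
      simp only [huvw, Fintype.prod_sum, prod_mul_distrib]
  simpa only [Fintype.card_pi, Fintype.card_fin] using key

theorem ite_vec_mem [DecidableEq α] (S : Finset (Fin 3 → α)) :
    TensorRankLE (fun x y z => if ![x, y, z] ∈ S then (1 : R) else 0) #S := by
  have key := of_eq_sum (κ := S) (T := fun x y z => if ![x, y, z] ∈ S then (1 : R) else 0)
    (fun s x => if s.1 0 = x then 1 else 0) (fun s y => if s.1 1 = y then 1 else 0)
    (fun s z => if s.1 2 = z then 1 else 0) fun x y z => by
      have eq_vec_iff (s : Fin 3 → α) : s = ![x, y, z] ↔ (s 0 = x ∧ s 1 = y) ∧ s 2 = z := by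
        simp [funext_iff, Fin.forall_fin_succ, and_assoc]
      simp only [ite_zero_mul_ite_zero, mul_one, ← eq_vec_iff]
      rw [sum_coe_sort S fun s => if s = ![x, y, z] then (1 : R) else 0, sum_ite_eq']
  simpa only [Fintype.card_coe] using key

end CommSemiring

theorem bool_or {R : Type*} [CommRing R] :
    TensorRankLE (fun x y z : Bool => if x || y || z then (1 : R) else 0) 2 := by
  refine ⟨![fun _ => 1, fun x => if x then 0 else -1], ![fun _ => 1, fun y => if y then 0 else 1],
    ![fun _ => 1, fun z => if z then 0 else 1], fun x y z => ?_⟩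
  cases x <;> cases y <;> cases z <;> simp

end TensorRankLE

theorem card_piAntidiag_nat {ι : Type*} [DecidableEq ι] (s : Finset ι) (n : ℕ) :
    #(s.piAntidiag n) = (#s).multichoose n := by
  rw [← card_finsuppAntidiag_nat_eq_multichoose, finsuppAntidiag, card_map, card_attach]

theorem tensorRankLE_ite_add_eq {R α β γ : Type*} [CommSemiring R]
    (f : α → ℕ) (g : β → ℕ) (h : γ → ℕ) (n : ℕ) :
    TensorRankLE (fun i j k => if f i + g j + h k = n then (1 : R) else 0) ((n + 2).choose 2) := by
  have card_eq : #(piAntidiag (univ : Finset (Fin 3)) n) = (n + 2).choose 2 := by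
    rw [card_piAntidiag_nat, card_fin, Nat.multichoose_eq, show 3 + n - 1 = n + 2 by omega,
      Nat.choose_symm_add]
  simpa [Fin.sum_univ_three, card_eq] using
    (TensorRankLE.ite_vec_mem (R := R) (piAntidiag univ n)).comp f g h

theorem forall_eq_one_iff_sum_eq_card {ι : Type*} [Fintype ι] (a : ι → ℕ) :
    (∀ t, a t = 1) ↔ ∑ t, a t = Fintype.card ι ∧ ∀ t, 1 ≤ a t := by
  refine ⟨fun ha => by simp [ha], fun ⟨hsum, hpos⟩ t => ?_⟩
  have sum_one_eq : ∑ _t : ι, 1 = ∑ t, a t := by simp [hsum]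
  exact ((sum_eq_sum_iff_of_le fun t _ => hpos t).1 sum_one_eq t (mem_univ t)).symm

theorem forall_toNat_add_eq_one_iff {ι : Type*} [Fintype ι] (i j k : ι → Bool) :
    (∀ t, (i t).toNat + (j t).toNat + (k t).toNat = 1) ↔
      ∑ t, (i t).toNat + ∑ t, (j t).toNat + ∑ t, (k t).toNat = Fintype.card ι ∧
        ∀ t, i t || j t || k t := by
  have one_le_iff (x y z : Bool) : 1 ≤ x.toNat + y.toNat + z.toNat ↔ x || y || z := by
    cases x <;> cases y <;> cases z <;> simp
  simp only [forall_eq_one_iff_sum_eq_card, sum_add_distrib, one_le_iff]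

theorem Wtensor_rank_le_general {R ι : Type*} [CommRing R] [Fintype ι] :
    TensorRankLE (fun i j k : ι → Bool =>
      if ∀ t, (i t).toNat + (j t).toNat + (k t).toNat = 1 then (1 : R) else 0)
      ((Fintype.card ι + 2).choose 2 * 2 ^ Fintype.card ι) := by
  let weight (i : ι → Bool) : ℕ := ∑ t, (i t).toNat
  have weights_rank := tensorRankLE_ite_add_eq (R := R) weight weight weight (Fintype.card ι)
  have cover_rank := TensorRankLE.prod_pi fun _ : ι => TensorRankLE.bool_or (R := R)
  rw [prod_const, card_univ] at cover_rank
  simpa only [forall_toNat_add_eq_one_iff, Fintype.prod_boole, ite_zero_mul_ite_zero, mul_one] using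
    weights_rank.mul cover_rank

/-- for every n ≥ 1, the tensor rank of W_n is at most
C(n+2, 2) · 2^n, i.e. W_n admits a decomposition with that many product terms. -/
theorem Wtensor_rank_le (n : ℕ) (hn : 1 ≤ n) :
    ∃ u v w : Fin ((n + 2).choose 2 * 2 ^ n) → (Fin n → Bool) → ℂ,
      ∀ i j k, Wtensor n i j k = ∑ t, u t i * v t j * w t k := by
  change TensorRankLE (Wtensor n) _
  unfold Wtensor
  simpa only [Fintype.card_fin, Bool.toNat, Bool.cond_eq_ite] using
    Wtensor_rank_le_general (R := ℂ) (ι := Fin n)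
end

section
/- For every N ≥ 2 and every n ≥ 1, the tensor rank of the n-copy N-partite W tensor W_{N,n} is at most C(n+N−1, N−1) · 2^n, where C(n+N−1, N−1) is the binomial coefficient (n+N−1 choose N−1). (Consequently, GHZ_N^{⊗m} can be transformed into W_N^{⊗n} by SLOCC whenever 2^m ≥ C(n+N−1, N−1) · 2^n.) -/
/-- The unnormalized n-copy N-partite W tensor: entry 1 at (i⁽¹⁾,…,i⁽ᴺ⁾) if at every
position 1 ≤ t ≤ n exactly one of the bits i⁽¹⁾_t,…,i⁽ᴺ⁾_t equals 1, and 0 otherwise. -/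
noncomputable def WN (N n : ℕ) (x : Fin N → Fin n → Bool) : ℂ :=
  if ∀ t, (Finset.univ.filter fun p => x p t = true).card = 1 then 1 else 0

/-!
Finite sets `s p` indexed by the parties `p` cover every position exactly once iff their
cardinalities add up to the number of positions and they cover every position at least once.
The first condition is a sum of product tensors over the ways of distributing the total among the
parties; the second is a sum of product tensors over the sets of positions, by inclusion–exclusion.
The exact-cover tensor is the pointwise product of the two, so the numbers of terms multiply.
-/

section TensorDecomposition

variable {P R ι κ : Type*} {I : P → Type*} [Fintype P] [CommSemiring R] [Fintype ι] [Fintype κ]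

/-- `T` is a sum of product tensors indexed by `ι`; for `ι = Fin r` this says that the tensor rank
of `T` is at most `r`. An arbitrary index type lets decompositions be indexed by the combinatorial
objects they come from. -/
def HasTensorDecomposition (ι : Type*) [Fintype ι] (T : (∀ p, I p) → R) : Prop :=
  ∃ u : ι → ∀ p, I p → R, ∀ x, T x = ∑ t, ∏ p, u t p (x p)

namespace HasTensorDecomposition

theorem reindex {T : (∀ p, I p) → R} (e : κ ≃ ι) (hT : HasTensorDecomposition ι T) :
    HasTensorDecomposition κ T := by
  obtain ⟨u, hu⟩ := hT
  exact ⟨u ∘ e, fun x => (hu x).trans (e.sum_comp fun t => ∏ p, u t p (x p)).symm⟩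

theorem mul {S T : (∀ p, I p) → R} (hS : HasTensorDecomposition ι S)
    (hT : HasTensorDecomposition κ T) : HasTensorDecomposition (ι × κ) (S * T) := by
  obtain ⟨u, hu⟩ := hS
  obtain ⟨v, hv⟩ := hT
  refine ⟨fun t p y => u t.1 p y * v t.2 p y, fun x => ?_⟩
  simp only [Pi.mul_apply, hu, hv, Finset.sum_mul_sum, Finset.prod_mul_distrib,
    Fintype.sum_prod_type]

theorem of_sum_mul_prod [Nonempty P] {T : (∀ p, I p) → R} (c : ι → R) (u : ι → ∀ p, I p → R)
    (hT : ∀ x, T x = ∑ t, c t * ∏ p, u t p (x p)) : HasTensorDecomposition ι T := by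
  classical
  -- A single party absorbs the coefficient.
  let p₀ : P := Classical.arbitrary P
  refine ⟨fun t p y => Pi.mulSingle (M := fun _ => R) p₀ (c t) p * u t p y, fun x => ?_⟩
  simp only [hT, Finset.prod_mul_distrib, Fintype.prod_pi_mulSingle']

end HasTensorDecomposition

theorem hasTensorDecomposition_sum_eq {A : Type*} [DecidableEq P] [DecidableEq A]
    [AddCommMonoid A] [Finset.HasAntidiagonal A] (w : ∀ p, I p → A) (a : A) :
    HasTensorDecomposition (Finset.piAntidiag (Finset.univ : Finset P) a)
      fun x : ∀ p, I p => if ∑ p, w p (x p) = a then (1 : R) else 0 := by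
  refine ⟨fun v p y => if w p y = v.1 p then 1 else 0, fun x => ?_⟩
  have prod_eq (v : P → A) : ∏ p, (if w p (x p) = v p then (1 : R) else 0) =
      if (fun p => w p (x p)) = v then 1 else 0 := by
    simp only [Fintype.prod_ite_zero, Finset.prod_const_one, funext_iff]
  simp only [prod_eq]
  rw [Finset.sum_coe_sort _ fun v => if (fun p => w p (x p)) = v then (1 : R) else 0]
  simp

end TensorDecomposition

section ExactCover

variable {P τ : Type*} [Fintype P] [Fintype τ] [DecidableEq τ]

theorem ite_forall_exists_mem_eq_sum {R : Type*} [CommRing R] (s : P → Finset τ) :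
    (if ∀ t, ∃ p, t ∈ s p then (1 : R) else 0) =
      ∑ S : Finset τ, (-1) ^ S.card * ∏ p, if Disjoint S (s p) then 1 else 0 := by
  have indicator_covered (t : τ) : (if ∃ p, t ∈ s p then (1 : R) else 0) =
      1 - if ∀ p, t ∉ s p then 1 else 0 := by
    by_cases h : ∃ p, t ∈ s p
    · simp [h, mt not_exists.2 (not_not.2 h)]
    · simp [not_exists.1 h]
  calc (if ∀ t, ∃ p, t ∈ s p then (1 : R) else 0)
      = ∏ t, (1 - if ∀ p, t ∉ s p then 1 else 0) := by
        simp only [← indicator_covered, Fintype.prod_ite_zero, Finset.prod_const_one]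
    _ = ∑ S : Finset τ, (-1) ^ S.card * ∏ t ∈ S, if ∀ p, t ∉ s p then 1 else 0 := by
        simp only [sub_eq_neg_add, Finset.prod_add_one, Finset.prod_neg, Finset.powerset_univ]
    _ = ∑ S : Finset τ, (-1) ^ S.card * ∏ p, if Disjoint S (s p) then 1 else 0 := by
        refine Finset.sum_congr rfl fun S _ => ?_
        have disjoint_iff : (∀ t ∈ S, ∀ p, t ∉ s p) ↔ ∀ p, Disjoint S (s p) := by
          simp only [Finset.disjoint_left]
          tauto
        rw [Finset.prod_ite_zero, Fintype.prod_ite_zero]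
        simp only [Finset.prod_const_one, disjoint_iff]

theorem sum_card_eq_sum_card_filter_mem (s : P → Finset τ) :
    ∑ p, (s p).card = ∑ t, (Finset.univ.filter fun p => t ∈ s p).card := by
  simpa [Finset.bipartiteAbove, Finset.bipartiteBelow] using
    Finset.sum_card_bipartiteAbove_eq_sum_card_bipartiteBelow
      (s := Finset.univ) (t := Finset.univ) fun p t => t ∈ s p

theorem forall_card_filter_mem_eq_one_iff (s : P → Finset τ) :
    (∀ t, (Finset.univ.filter fun p => t ∈ s p).card = 1) ↔
      ∑ p, (s p).card = Fintype.card τ ∧ ∀ t, ∃ p, t ∈ s p := by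
  have covered_iff (t : τ) :
      (∃ p, t ∈ s p) ↔ 1 ≤ (Finset.univ.filter fun p => t ∈ s p).card := by
    simp [Nat.one_le_iff_ne_zero, Finset.filter_eq_empty_iff]
  simp only [covered_iff, sum_card_eq_sum_card_filter_mem]
  refine ⟨fun h => ⟨by simp [h], fun t => (h t).ge⟩, fun ⟨hsum, hle⟩ t => ?_⟩
  have sum_one_eq : ∑ _ : τ, 1 = ∑ t, (Finset.univ.filter fun p => t ∈ s p).card := by
    simp [hsum]
  exact ((Finset.sum_eq_sum_iff_of_le fun t _ => hle t).1 sum_one_eq t (Finset.mem_univ t)).symm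

end ExactCover

theorem card_piAntidiag_univ (P : Type*) [Fintype P] [Nonempty P] [DecidableEq P] (n : ℕ) :
    (Finset.piAntidiag (Finset.univ : Finset P) n).card =
      (n + Fintype.card P - 1).choose (Fintype.card P - 1) := by
  have hP : 0 < Fintype.card P := Fintype.card_pos
  rw [← Finset.map_sym_eq_piAntidiag, Finset.card_map, Finset.sym_univ, Finset.card_univ,
    Sym.card_sym_eq_choose, add_comm]
  exact Nat.choose_symm_of_eq_add (by lia)

section ExactCoverTensor

variable {P τ : Type*} {I : P → Type*} [Fintype P] [Nonempty P] [Fintype τ] [DecidableEq τ]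

theorem hasTensorDecomposition_forall_exists_mem (R : Type*) [CommRing R]
    (s : ∀ p, I p → Finset τ) :
    HasTensorDecomposition (Finset τ)
      fun x : ∀ p, I p => if ∀ t, ∃ p, t ∈ s p (x p) then (1 : R) else 0 :=
  .of_sum_mul_prod (fun S => (-1) ^ S.card) (fun S p y => if Disjoint S (s p y) then 1 else 0)
    fun x => ite_forall_exists_mem_eq_sum fun p => s p (x p)

theorem WN_rank_le_general (R : Type*) [CommRing R] (s : ∀ p, I p → Finset τ) :
    HasTensorDecomposition
      (Fin ((Fintype.card τ + Fintype.card P - 1).choose (Fintype.card P - 1) *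
        2 ^ Fintype.card τ))
      fun x : ∀ p, I p =>
        if ∀ t, (Finset.univ.filter fun p => t ∈ s p (x p)).card = 1 then (1 : R) else 0 := by
  classical
  have decomposition := (hasTensorDecomposition_sum_eq (R := R) (fun p y => (s p y).card)
    (Fintype.card τ)).mul (hasTensorDecomposition_forall_exists_mem R s)
  have card_index : Fintype.card
      (Finset.piAntidiag (Finset.univ : Finset P) (Fintype.card τ) × Finset τ) =
      (Fintype.card τ + Fintype.card P - 1).choose (Fintype.card P - 1) *
        2 ^ Fintype.card τ := by
    rw [Fintype.card_prod, Fintype.card_coe, card_piAntidiag_univ, Fintype.card_finset]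
  convert decomposition.reindex (Fintype.equivFinOfCardEq card_index).symm using 2 with x
  simp only [forall_card_filter_mem_eq_one_iff, Pi.mul_apply, ite_zero_mul_ite_zero, mul_one]

end ExactCoverTensor

/-- for N ≥ 2 and n ≥ 1, the tensor rank of W_{N,n} is at most
C(n+N−1, N−1) · 2^n, i.e. W_{N,n} admits a decomposition with that many product terms. -/
theorem WN_rank_le (N n : ℕ) (hN : 2 ≤ N) (hn : 1 ≤ n) :
    ∃ u : Fin ((n + N - 1).choose (N - 1) * 2 ^ n) → Fin N → (Fin n → Bool) → ℂ,
      ∀ x : Fin N → Fin n → Bool, WN N n x = ∑ t, ∏ p, u t p (x p) := by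
  have : Nonempty (Fin N) := ⟨⟨0, by lia⟩⟩
  have decomposition := WN_rank_le_general ℂ fun (_ : Fin N) (y : Fin n → Bool) =>
    Finset.univ.filter fun t => y t = true
  rw [Fintype.card_fin, Fintype.card_fin] at decomposition
  simpa only [HasTensorDecomposition, WN, Finset.mem_filter_univ] using decomposition
end

section
/- For every N ≥ 2, the limit as n → ∞ of (log₂ rk(W_{N,n})) / n exists and equals 1, where rk denotes tensor rank. (Since a state is reachable from GHZ_N^{⊗m} = Σ_{l∈{0,1}^m}|l⟩^{⊗N} by SLOCC if and only if its tensor rank is at most 2^m, this says exactly that the SLOCC entanglement transformation rate R(GHZ_N, W_N) = 1; for N = 3 this is R(|GHZ⟩, |W⟩) = 1.) -/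
/-- The tensor rank of W_{N,n}: the least r admitting a rank-r decomposition. -/
noncomputable def rkWN (N n : ℕ) : ℕ :=
  sInf {r : ℕ | ∃ u : Fin r → Fin N → (Fin n → Bool) → ℂ,
    ∀ x : Fin N → Fin n → Bool, WN N n x = ∑ t, ∏ p, u t p (x p)}

/-! The limit is squeezed between `2 ^ n ≤ rk(W_{N,n}) ≤ (n * N + 1) * 2 ^ n`.

*Lower bound.* Fix the inputs of all parties but two to `0`, and complement the input of one of the
remaining two: what is left of `W_{N,n}` is the identity matrix of size `2 ^ n`, and the rank of a
flattening is at most the tensor rank.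

*Upper bound.* One copy of `W` has border rank two: over the polynomial ring,
`(e₀ + X e₁)^{⊗N} - e₀^{⊗N} = X W + O(X²)`. The `n`-fold Kronecker power of the left-hand side is a
sum of `2 ^ n` product tensors, its entries have degree at most `n * N`, and the coefficient of
`X ^ n` is `W_{N,n}`. Interpolation writes this coefficient as a linear combination of the values
at `n * N + 1` points.
-/

open Filter Finset Polynomial Topology

section TensorRank

variable {ι R : Type*} [Fintype ι] [CommSemiring R]

/-- The tensor `T`, with parties `ι` and index types `α p`, is a sum of exactly `r` product
tensors; the tensor rank of `T` is the least such `r`. Allowing any commutative semiring of entries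
covers the polynomial tensors that exhibit border rank. -/
def HasRankDecomposition {α : ι → Type*} (T : (∀ p, α p) → R) (r : ℕ) : Prop :=
  ∃ u : Fin r → ∀ p, α p → R, ∀ x, T x = ∑ t, ∏ p, u t p (x p)

namespace HasRankDecomposition

section Constructions

variable {α : ι → Type*} {T : (∀ p, α p) → R}

theorem of_eq_sum {κ : Type*} [Fintype κ] (u : κ → ∀ p, α p → R)
    (hT : ∀ x, T x = ∑ i, ∏ p, u i p (x p)) : HasRankDecomposition T (Fintype.card κ) :=
  let e := (Fintype.equivFin κ).symm
  ⟨fun t => u (e t), fun x => (hT x).trans (e.sum_comp fun i => ∏ p, u i p (x p)).symm⟩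

theorem of_eq_sum_mul [Nonempty ι] {κ : Type*} [Fintype κ] (c : κ → R) (u : κ → ∀ p, α p → R)
    (hT : ∀ x, T x = ∑ i, c i * ∏ p, u i p (x p)) : HasRankDecomposition T (Fintype.card κ) := by
  classical
  obtain ⟨p₀⟩ := ‹Nonempty ι›
  refine of_eq_sum (fun i p a => Pi.mulSingle (M := fun _ => R) p₀ (c i) p * u i p a) fun x => ?_
  simp only [hT, prod_mul_distrib, Fintype.prod_pi_mulSingle']

end Constructions

theorem kronecker {τ : Type*} [Fintype τ] {α : ι → τ → Type*} {T : ∀ t, (∀ p, α p t) → R}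
    {r : τ → ℕ} (hT : ∀ t, HasRankDecomposition (T t) (r t)) :
    HasRankDecomposition (fun x : ∀ p t, α p t => ∏ t, T t fun p => x p t) (∏ t, r t) := by
  classical
  choose u hu using hT
  have hcard : Fintype.card (∀ t, Fin (r t)) = ∏ t, r t := by simp
  rw [← hcard]
  refine of_eq_sum (fun j p a => ∏ t, u t (j t) p (a t)) fun x => ?_
  calc ∏ t, T t (fun p => x p t)
      = ∏ t, ∑ i, ∏ p, u t i p (x p t) := by simp only [hu]
    _ = ∑ j : ∀ t, Fin (r t), ∏ t, ∏ p, u t (j t) p (x p t) := Fintype.prod_sum _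
    _ = ∑ j : ∀ t, Fin (r t), ∏ p, ∏ t, u t (j t) p (x p t) :=
      sum_congr rfl fun _ _ => prod_comm

end HasRankDecomposition

end TensorRank

section Interpolation

variable {F : Type*} [Field F]

theorem coeff_eq_sum_basis_coeff_mul_eval {κ : Type*} [Fintype κ] [DecidableEq κ] {v : κ → F}
    (hv : Function.Injective v) {f : F[X]} (hf : f.degree < Fintype.card κ) (d : ℕ) :
    f.coeff d = ∑ k, (Lagrange.basis univ v k).coeff d * f.eval (v k) := by
  conv_lhs => rw [Lagrange.eq_interpolate (s := univ) hv.injOn hf]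
  simp [Lagrange.interpolate_apply, mul_comm]

theorem HasRankDecomposition.coeff [Infinite F] {ι : Type*} [Fintype ι] [Nonempty ι]
    {α : ι → Type*} {T : (∀ p, α p) → F[X]} {r : ℕ} (hT : HasRankDecomposition T r)
    {D : ℕ} (hD : ∀ x, (T x).degree ≤ D) (d : ℕ) :
    HasRankDecomposition (fun x => (T x).coeff d) ((D + 1) * r) := by
  obtain ⟨u, hu⟩ := hT
  let v : Fin (D + 1) → F := fun k => Infinite.natEmbedding F k
  have hv : Function.Injective v := (Infinite.natEmbedding F).injective.comp Fin.val_injective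
  have hcard : Fintype.card (Fin (D + 1) × Fin r) = (D + 1) * r := by simp
  rw [← hcard]
  refine of_eq_sum_mul (fun i => (Lagrange.basis univ v i.1).coeff d)
    (fun i p a => (u i.2 p a).eval (v i.1)) fun x => ?_
  have hdeg : (T x).degree < Fintype.card (Fin (D + 1)) :=
    (hD x).trans_lt (by rw [Fintype.card_fin]; exact_mod_cast D.lt_succ_self)
  rw [coeff_eq_sum_basis_coeff_mul_eval hv hdeg]
  simp only [hu, eval_finsetSum, eval_prod, mul_sum, Fintype.sum_prod_type]

end Interpolation

theorem HasRankDecomposition.rank_flattening_le {ι R : Type*} [Fintype ι] [CommRing R]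
    [Nontrivial R] {α : ι → Type*} {T : (∀ p, α p) → R} {r : ℕ} (hT : HasRankDecomposition T r)
    (P : ι → Prop) [DecidablePred P] {m n : Type*} [Fintype n]
    (row : m → ∀ p, α p) (col : n → ∀ p, α p) :
    (Matrix.of fun a b => T fun p => if P p then row a p else col b p).rank ≤ r := by
  obtain ⟨u, hu⟩ := hT
  let A : Matrix m (Fin r) R := .of fun a t => ∏ p with P p, u t p (row a p)
  let B : Matrix (Fin r) n R := .of fun t b => ∏ p with ¬ P p, u t p (col b p)
  have hAB : (Matrix.of fun a b => T fun p => if P p then row a p else col b p) = A * B := by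
    ext a b
    simp only [Matrix.of_apply, Matrix.mul_apply, hu, A, B]
    refine sum_congr rfl fun t _ => ?_
    rw [← prod_ite]
    exact prod_congr rfl fun p _ => by split_ifs <;> rfl
  calc _ = (A * B).rank := by rw [hAB]
    _ ≤ A.rank := Matrix.rank_mul_le_left A B
    _ ≤ r := by simpa using A.rank_le_card_width

theorem tendsto_logb_div_of_pow_le_of_le_mul_pow {b : ℝ} (hb : 1 < b) {f g : ℕ → ℝ}
    (hlow : ∀ n, b ^ n ≤ f n) (hup : ∀ n, f n ≤ g n * b ^ n)
    (hg : Tendsto (fun n : ℕ => Real.logb b (g n) / n) atTop (𝓝 0)) :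
    Tendsto (fun n : ℕ => Real.logb b (f n) / n) atTop (𝓝 1) := by
  have hpow (n : ℕ) : 0 < b ^ n := pow_pos (one_pos.trans hb) n
  have hlogb_pow (n : ℕ) : Real.logb b (b ^ n) = n := by
    rw [Real.logb_pow, Real.logb_self_eq_one hb, mul_one]
  have hup_lim : Tendsto (fun n : ℕ => Real.logb b (g n) / n + 1) atTop (𝓝 1) := by
    simpa using hg.add_const 1
  refine tendsto_of_tendsto_of_tendsto_of_le_of_le' tendsto_const_nhds hup_lim ?_ ?_
  all_goals
    filter_upwards [eventually_gt_atTop 0] with n hn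
    have hn : (0 : ℝ) < n := by exact_mod_cast hn
  · rw [one_le_div hn, ← hlogb_pow n]
    exact Real.logb_le_logb_of_le hb (hpow n) (hlow n)
  · have hf : 0 < f n := (hpow n).trans_le (hlow n)
    have hgn : 0 < g n := pos_of_mul_pos_left (hf.trans_le (hup n)) (hpow n).le
    rw [← div_self hn.ne', ← add_div]
    gcongr
    calc Real.logb b (f n) ≤ Real.logb b (g n * b ^ n) := Real.logb_le_logb_of_le hb hf (hup n)
      _ = Real.logb b (g n) + n := by
        rw [Real.logb_mul hgn.ne' (hpow n).ne', hlogb_pow]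

theorem tendsto_logb_linear_div_zero (b : ℝ) {c : ℝ} (hc : 0 < c) (d : ℝ) :
    Tendsto (fun n : ℕ => Real.logb b (n * c + d) / n) atTop (𝓝 0) := by
  have hlin : Tendsto (fun n : ℕ => (n : ℝ) * c + d) atTop atTop :=
    tendsto_atTop_add_const_right _ _ (tendsto_natCast_atTop_atTop.atTop_mul_const hc)
  have hlog := (Real.tendsto_pow_log_div_mul_add_atTop c⁻¹ (-(d * c⁻¹)) 1
    (inv_ne_zero hc.ne')).comp hlin
  convert hlog.div_const (Real.log b) using 2 with n
  · have hn : c⁻¹ * (n * c + d) + -(d * c⁻¹) = n := by field_simp; ring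
    simp only [Function.comp_apply, pow_one, hn, Real.logb]
    exact div_right_comm _ _ _
  · simp

section DeformedW

variable {ι : Type*} [Fintype ι]

/-- The Hamming weight of a bit string, in the form in which it enters `WN`. -/
def bitWeight (b : ι → Bool) : ℕ := #{p | b p = true}

theorem bitWeight_le_card (b : ι → Bool) : bitWeight b ≤ Fintype.card ι :=
  card_le_univ _

theorem bitWeight_pair_eq_one_iff [DecidableEq ι] {p₀ p₁ : ι} (hp : p₀ ≠ p₁) (a b : Bool) :
    bitWeight (fun p => if p = p₀ then a else if p = p₁ then !b else false) = 1 ↔ a = b := by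
  have hsplit : bitWeight (fun p => if p = p₀ then a else if p = p₁ then !b else false) =
      a.toNat + (!b).toNat := by
    rw [bitWeight, card_filter]
    calc _ = ∑ p, ((if p = p₀ then a.toNat else 0) + if p = p₁ then (!b).toNat else 0) := by
          refine sum_congr rfl fun p _ => ?_
          rcases eq_or_ne p p₀ with rfl | h₀
          · cases a <;> simp [hp]
          · rcases eq_or_ne p p₁ with rfl | h₁
            · cases b <;> simp [h₀]
            · simp [h₀, h₁]
      _ = a.toNat + (!b).toNat := by simp [sum_add_distrib]
  rw [hsplit]
  cases a <;> cases b <;> simp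

variable (R : Type*) [CommRing R]

/-- The polynomial tensor `(e₀ + X e₁)^{⊗ι} - e₀^{⊗ι} = X W + O(X²)`, which witnesses that the
one-copy W tensor has border rank at most two. -/
noncomputable def deformedW (b : ι → Bool) : R[X] :=
  (∏ p, if b p then X else 1) - ∏ p, if b p then 0 else 1

theorem deformedW_eq_ite (b : ι → Bool) :
    deformedW R b = if bitWeight b = 0 then 0 else X ^ bitWeight b := by
  have hX : (∏ p, if b p then (X : R[X]) else 1) = X ^ bitWeight b := by
    simp [prod_ite, bitWeight]
  have h0 : (∏ p, if b p then (0 : R[X]) else 1) = 0 ^ bitWeight b := by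
    simp [prod_ite, bitWeight]
  rw [deformedW, hX, h0]
  split_ifs with hb <;> simp [hb]

theorem hasRankDecomposition_deformedW [Nonempty ι] :
    HasRankDecomposition (deformedW R : (ι → Bool) → R[X]) 2 := by
  refine .of_eq_sum_mul (κ := Fin 2) ![1, -1]
    ![fun _ a => if a then X else 1, fun _ a => if a then 0 else 1] fun b => ?_
  simp [deformedW, sub_eq_add_neg]

variable {τ : Type*} [Fintype τ]

theorem prod_deformedW_eq_ite (x : ι → τ → Bool) :
    ∏ t, deformedW R (fun p => x p t) =
      if ∀ t, bitWeight (fun p => x p t) ≠ 0 then X ^ ∑ t, bitWeight (fun p => x p t) else 0 := by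
  simp only [deformedW_eq_ite]
  split_ifs with h
  · rw [← prod_pow_eq_pow_sum]
    exact prod_congr rfl fun t _ => if_neg (h t)
  · push Not at h
    obtain ⟨t, ht⟩ := h
    exact prod_eq_zero (mem_univ t) (if_pos ht)

theorem degree_prod_deformedW_le (x : ι → τ → Bool) :
    (∏ t, deformedW R (fun p => x p t)).degree ≤
      (Fintype.card τ * Fintype.card ι : ℕ) := by
  have hsum : ∑ t, bitWeight (fun p => x p t) ≤ Fintype.card τ * Fintype.card ι :=
    sum_le_card_nsmul _ _ _ fun t _ => bitWeight_le_card _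
  rw [prod_deformedW_eq_ite]
  split_ifs
  · exact (degree_X_pow_le _).trans (by exact_mod_cast hsum)
  · simp

theorem coeff_card_prod_deformedW (x : ι → τ → Bool)
    [Decidable (∀ t, bitWeight (fun p => x p t) = 1)] :
    (∏ t, deformedW R (fun p => x p t)).coeff (Fintype.card τ) =
      if ∀ t, bitWeight (fun p => x p t) = 1 then 1 else 0 := by
  rw [prod_deformedW_eq_ite]
  split_ifs with hpos hone hone
  · simp [hone]
  · have hsum : ∑ _t : τ, 1 ≠ ∑ t, bitWeight (fun p => x p t) := by
      rw [Ne, sum_eq_sum_iff_of_le fun t _ => Nat.one_le_iff_ne_zero.mpr (hpos t)]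
      simpa [eq_comm] using hone
    rw [coeff_X_pow, if_neg (by simpa using hsum)]
  · exact absurd (fun t => by simp [hone t]) hpos
  · simp

end DeformedW

theorem WN_eq_ite_bitWeight {N n : ℕ} (x : Fin N → Fin n → Bool) :
    WN N n x = if ∀ t, bitWeight (fun p => x p t) = 1 then 1 else 0 := by
  unfold WN bitWeight
  congr

theorem hasRankDecomposition_WN (N n : ℕ) [NeZero N] :
    HasRankDecomposition (WN N n) ((n * N + 1) * 2 ^ n) := by
  have hprod : HasRankDecomposition
      (fun x : Fin N → Fin n → Bool => ∏ t, deformedW ℂ (fun p => x p t)) (2 ^ n) := by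
    simpa using HasRankDecomposition.kronecker fun _ : Fin n =>
      hasRankDecomposition_deformedW (ι := Fin N) ℂ
  have hcoeff (x : Fin N → Fin n → Bool) :
      (∏ t, deformedW ℂ (fun p => x p t)).coeff n = WN N n x := by
    rw [WN_eq_ite_bitWeight]
    simpa using coeff_card_prod_deformedW ℂ x
  simpa only [hcoeff] using
    hprod.coeff (fun x => by simpa using degree_prod_deformedW_le ℂ x) n

theorem WN_flattening_eq_one {N : ℕ} (n : ℕ) {p₀ p₁ : Fin N} (hp : p₀ ≠ p₁) :
    (Matrix.of fun a b : Fin n → Bool => WN N n fun p =>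
      if p = p₀ then a else if p = p₁ then fun t => !b t else fun _ => false) = 1 := by
  ext a b
  simp only [Matrix.of_apply, WN_eq_ite_bitWeight, ite_apply, bitWeight_pair_eq_one_iff hp,
    Matrix.one_apply, funext_iff]

theorem two_pow_le_of_hasRankDecomposition_WN {N n r : ℕ} (hN : 2 ≤ N)
    (h : HasRankDecomposition (WN N n) r) : 2 ^ n ≤ r := by
  have : Nontrivial (Fin N) := Fin.nontrivial_iff_two_le.mpr hN
  obtain ⟨p₀, p₁, hp⟩ := exists_pair_ne (Fin N)
  have hrank := h.rank_flattening_le (· = p₀) (fun (a : Fin n → Bool) _ => a)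
    fun (b : Fin n → Bool) p => if p = p₁ then fun t => !b t else fun _ => false
  rw [WN_flattening_eq_one n hp, Matrix.rank_one] at hrank
  simpa using hrank

theorem rkWN_le (N n : ℕ) [NeZero N] : rkWN N n ≤ (n * N + 1) * 2 ^ n :=
  Nat.sInf_le (hasRankDecomposition_WN N n)

theorem two_pow_le_rkWN {N : ℕ} (hN : 2 ≤ N) (n : ℕ) : 2 ^ n ≤ rkWN N n := by
  have : NeZero N := ⟨by omega⟩
  exact two_pow_le_of_hasRankDecomposition_WN hN
    (Nat.sInf_mem (s := {r | HasRankDecomposition (WN N n) r}) ⟨_, hasRankDecomposition_WN N n⟩)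

/-- for every N ≥ 2, lim_{n→∞} (log₂ rk(W_{N,n})) / n = 1.
(Equivalently, the SLOCC entanglement transformation rate R(GHZ_N, W_N) = 1.) -/
theorem log_rank_WN_div_n_tendsto_one (N : ℕ) (hN : 2 ≤ N) :
    Filter.Tendsto (fun n : ℕ => Real.logb 2 (rkWN N n) / n) Filter.atTop (nhds 1) := by
  have : NeZero N := ⟨by omega⟩
  have hN_pos : (0 : ℝ) < N := by exact_mod_cast NeZero.pos N
  refine tendsto_logb_div_of_pow_le_of_le_mul_pow one_lt_two (g := fun n => n * N + 1) ?_ ?_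
    (tendsto_logb_linear_div_zero 2 hN_pos 1)
  · exact fun n => by exact_mod_cast two_pow_le_rkWN hN n
  · exact fun n => by exact_mod_cast rkWN_le N n
end

section
/- Let d ≥ 2 and j_1 ≥ ⋯ ≥ j_d ≥ 1 with N = j_1 + ⋯ + j_d, and let v_1,…,v_N ∈ ℕ^{d−1} satisfy Σ_{p=1}^N v_p = (n·j_2,…,n·j_d). Then the tensor [v_1,…,v_N]_n has tensor rank at most ∏_{k=2}^d (j_k + 1)^n. -/
/-- The unnormalized Dicke tensor D(j_1,…,j_d). -/
noncomputable def Dicke (d : ℕ) (j : Fin d → ℕ) (N : ℕ) (s : Fin N → Fin d) : ℂ :=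
  if ∀ i, (Finset.univ.filter fun p => s p = i).card = j i then 1 else 0

/-- The n-th tensor power D(j_1,…,j_d)^{⊗n}. -/
noncomputable def DickePow (d : ℕ) (j : Fin d → ℕ) (N n : ℕ)
    (α : Fin N → Fin n → Fin d) : ℂ :=
  ∏ t, Dicke d j N (fun p => α p t)

/-- The characteristic vector: `charVec α k` counts the positions t with α(t) = k.
Restricted to indices k with k.val ≠ 0 this is the vector (l_2,…,l_d) ∈ ℕ^{d−1}. -/
def charVec {d n : ℕ} (α : Fin n → Fin d) (k : Fin d) : ℕ :=
  (Finset.univ.filter fun t => α t = k).card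

/-- The tensor [v_1,…,v_N]_n: agrees with D(j_1,…,j_d)^{⊗n} on entries (α_1,…,α_N)
with C(α_p) = v_p for all p, and is 0 elsewhere. -/
noncomputable def bracketDicke (d : ℕ) (j : Fin d → ℕ) (N n : ℕ)
    (v : Fin N → {k : Fin d // k.val ≠ 0} → ℕ) (α : Fin N → Fin n → Fin d) : ℂ :=
  if ∀ p, ∀ k : {k : Fin d // k.val ≠ 0}, charVec (α p) k.val = v p k
  then DickePow d j N n α else 0

/-!
On the support of `[v_1, …, v_N]_n`, the number `m k t` of parties holding symbol `k ≠ 0` at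
position `t` satisfies `∑ t, m k t = n * j k`. Hence it suffices to test `m k t = j k` modulo
`j k + 1`: the congruence forces `m k t ≥ j k`, and the sum leaves no room for strict inequality.
The count of the remaining symbol `0` is then determined by `N = ∑ i, j i`.

The congruences together say that a sum over the parties, with values in the finite abelian group
`G = ∏ k ≠ 0, (ℤ/(j k + 1))ⁿ`, takes a prescribed value. Expanding this indicator in the characters
of `G` writes it as a sum of `|G|` product tensors, and the restriction to `C(α_p) = v_p` is a
condition on each party separately, so it does not increase the rank.
-/

theorem addChar_map_sum {ι G M : Type*} [AddCommMonoid G] [CommMonoid M] (ψ : AddChar G M)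
    (s : Finset ι) (f : ι → G) : ψ (∑ i ∈ s, f i) = ∏ i ∈ s, ψ (f i) :=
  map_prod ψ.toMonoidHom (fun i => Multiplicative.ofAdd (f i)) s

/-- `HasRankLE r T` says that the tensor `T` over the input types `A p` is a sum of `r` product
tensors. Since product tensors may be zero, for a nonempty set of parties this means that the tensor
rank is at most `r`. -/
def HasRankLE {P R : Type*} {A : P → Type*} [Fintype P] [CommSemiring R]
    (r : ℕ) (T : (∀ p, A p) → R) : Prop :=
  ∃ u : Fin r → ∀ p, A p → R, ∀ α, T α = ∑ t, ∏ p, u t p (α p)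

namespace HasRankLE

variable {P R : Type*} {A : P → Type*} [Fintype P]

theorem prod_mul [CommSemiring R] {r : ℕ} {T : (∀ p, A p) → R} (hT : HasRankLE r T)
    (g : ∀ p, A p → R) : HasRankLE r fun α => (∏ p, g p (α p)) * T α := by
  obtain ⟨u, hu⟩ := hT
  refine ⟨fun t p a => g p a * u t p a, fun α => ?_⟩
  simp only [hu, Finset.mul_sum, Finset.prod_mul_distrib]

theorem sum_mul_prod [CommSemiring R] [Nonempty P] {ι : Type*} [Fintype ι] (w : ι → R)
    (u : ι → ∀ p, A p → R) :
    HasRankLE (Fintype.card ι) fun α => ∑ c, w c * ∏ p, u c p (α p) := by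
  classical
  let p₀ : P := Classical.arbitrary P
  let e := Fintype.equivFin ι
  refine ⟨fun t p a => (if p = p₀ then w (e.symm t) else 1) * u (e.symm t) p a, fun α => ?_⟩
  simp only [Finset.prod_mul_distrib, Fintype.prod_ite_eq']
  exact (e.symm.sum_comp fun c => w c * ∏ p, u c p (α p)).symm

theorem ite_sum_eq [Nonempty P] {G : Type*} [AddCommGroup G] [Fintype G] [DecidableEq G]
    (f : ∀ p, A p → G) (b : G) :
    HasRankLE (Fintype.card G) fun α => if ∑ p, f p (α p) = b then (1 : ℂ) else 0 := by
  have hG : (Fintype.card G : ℂ) ≠ 0 := Nat.cast_ne_zero.2 Fintype.card_ne_zero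
  have expand_characters (α : ∀ p, A p) : (if ∑ p, f p (α p) = b then (1 : ℂ) else 0) =
      ∑ ψ : AddChar G ℂ, (ψ (-b) / Fintype.card G) * ∏ p, ψ (f p (α p)) :=
    calc (if ∑ p, f p (α p) = b then (1 : ℂ) else 0)
      _ = (∑ ψ : AddChar G ℂ, ψ (∑ p, f p (α p) + -b)) / Fintype.card G := by
        rw [AddChar.sum_apply_eq_ite, ite_div, div_self hG, zero_div]
        simp only [add_neg_eq_zero]
      _ = _ := by
        rw [Finset.sum_div]
        refine Finset.sum_congr rfl fun ψ _ => ?_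
        rw [AddChar.map_add_eq_mul, addChar_map_sum]
        ring
  simp only [expand_characters]
  rw [← AddChar.card_eq (α := G)]
  exact sum_mul_prod _ fun (ψ : AddChar G ℂ) p a => ψ (f p a)

end HasRankLE

theorem eq_of_forall_modEq_succ_of_sum_eq {ι : Type*} [Fintype ι] {m : ι → ℕ} {J : ℕ}
    (hmod : ∀ t, m t ≡ J [MOD J + 1]) (hsum : ∑ t, m t = Fintype.card ι * J) (t : ι) :
    m t = J := by
  have hle (t : ι) : J ≤ m t := (hmod t).symm.le_of_lt_add (by omega)
  have hsum' : ∑ _t : ι, J = ∑ t, m t := by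
    rw [hsum, Finset.sum_const, Finset.card_univ, smul_eq_mul]
  exact ((Finset.sum_eq_sum_iff_of_le fun t _ => hle t).1 hsum' t (Finset.mem_univ t)).symm

theorem eq_of_forall_ne_of_sum_eq {ι M : Type*} [Fintype ι] [AddCommMonoid M] [IsRightCancelAdd M]
    {f g : ι → M} (i₀ : ι) (hne : ∀ i ≠ i₀, f i = g i) (hsum : ∑ i, f i = ∑ i, g i) : f = g := by
  classical
  rw [Fintype.sum_eq_add_sum_subtype_ne f i₀, Fintype.sum_eq_add_sum_subtype_ne g i₀,
    Finset.sum_congr rfl fun (i : {i // i ≠ i₀}) _ => hne i i.2] at hsum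
  ext i
  obtain rfl | hi := eq_or_ne i i₀
  · exact add_right_cancel hsum
  · exact hne i hi

section Dicke

variable {d N n : ℕ} {j : Fin d → ℕ}

/-- The number of parties holding symbol `i` at position `t`. -/
def symbolCount (α : Fin N → Fin n → Fin d) (i : Fin d) (t : Fin n) : ℕ :=
  (Finset.univ.filter fun p => α p t = i).card

theorem sum_symbolCount_eq_sum_charVec (α : Fin N → Fin n → Fin d) (i : Fin d) :
    ∑ t, symbolCount α i t = ∑ p, charVec (α p) i := by
  simp only [symbolCount, charVec, Finset.card_filter]
  exact Finset.sum_comm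

theorem sum_symbolCount (α : Fin N → Fin n → Fin d) (t : Fin n) :
    ∑ i, symbolCount α i t = N := by
  simp only [symbolCount]
  rw [← Finset.card_eq_sum_card_fiberwise fun _ _ => Finset.mem_univ _, Finset.card_fin]

theorem dickePow_eq_ite (α : Fin N → Fin n → Fin d) :
    DickePow d j N n α = if ∀ t i, symbolCount α i t = j i then 1 else 0 := by
  simp only [DickePow, Dicke, symbolCount, Fintype.prod_boole]
  congr

/-- The group `∏ k ≠ 0, (ℤ/(j k + 1))ⁿ`, in which the counts of the symbols `k ≠ 0` at each position
are recorded modulo `j k + 1`. -/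
abbrev CountResidues (n : ℕ) (j : Fin d → ℕ) : Type :=
  ∀ k : {k : Fin d // k.val ≠ 0}, Fin n → ZMod (j k.val + 1)

theorem card_countResidues : Fintype.card (CountResidues n j) =
    ∏ k : {k : Fin d // k.val ≠ 0}, (j k.val + 1) ^ n := by
  simp only [Fintype.card_pi, ZMod.card, Finset.prod_const, Finset.card_fin]

/-- The contribution of a party with input `a` to the symbol counts. -/
def symbolIndicator (j : Fin d → ℕ) (a : Fin n → Fin d) : CountResidues n j :=
  fun k t => if a t = k.val then 1 else 0

/-- The residues of the symbol counts that the Dicke tensor prescribes. -/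
def dickeResidues (n : ℕ) (j : Fin d → ℕ) : CountResidues n j :=
  fun k _ => (j k.val : ZMod (j k.val + 1))

theorem sum_symbolIndicator_apply (α : Fin N → Fin n → Fin d) (k : {k : Fin d // k.val ≠ 0})
    (t : Fin n) : (∑ p, symbolIndicator j (α p)) k t = symbolCount α k.val t := by
  simp only [Finset.sum_apply, symbolIndicator, Finset.sum_boole, symbolCount]

theorem sum_symbolIndicator_eq_dickeResidues_iff_modEq (α : Fin N → Fin n → Fin d) :
    ∑ p, symbolIndicator j (α p) = dickeResidues n j ↔
      ∀ (k : {k : Fin d // k.val ≠ 0}) t, symbolCount α k.val t ≡ j k.val [MOD j k.val + 1] := by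
  simp only [funext_iff, sum_symbolIndicator_apply, dickeResidues, ZMod.natCast_eq_natCast_iff]

theorem symbolCount_eq_of_forall_ne_zero (hN : N = ∑ i, j i) (α : Fin N → Fin n → Fin d)
    (t : Fin n) (hne : ∀ k : {k : Fin d // k.val ≠ 0}, symbolCount α k.val t = j k.val)
    (i : Fin d) : symbolCount α i t = j i := by
  have : NeZero d := ⟨(Fin.pos i).ne'⟩
  refine congrFun (eq_of_forall_ne_of_sum_eq (f := (symbolCount α · t)) 0 (fun k hk => ?_) ?_) i
  · exact hne ⟨k, Fin.val_ne_zero_iff.2 hk⟩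
  · rw [sum_symbolCount, hN]

theorem sum_symbolIndicator_eq_dickeResidues_iff (hN : N = ∑ i, j i) (α : Fin N → Fin n → Fin d)
    (hα : ∀ k : {k : Fin d // k.val ≠ 0}, ∑ p, charVec (α p) k.val = n * j k.val) :
    ∑ p, symbolIndicator j (α p) = dickeResidues n j ↔
      ∀ t i, symbolCount α i t = j i := by
  rw [sum_symbolIndicator_eq_dickeResidues_iff_modEq]
  refine ⟨fun hmod t => ?_, fun h k t => h t k ▸ Nat.ModEq.rfl⟩
  refine symbolCount_eq_of_forall_ne_zero hN α t fun k => ?_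
  refine eq_of_forall_modEq_succ_of_sum_eq (hmod k) ?_ t
  rw [sum_symbolCount_eq_sum_charVec, hα, Fintype.card_fin]

theorem bracketDicke_eq_prod_mul_ite (hN : N = ∑ i, j i)
    (v : Fin N → {k : Fin d // k.val ≠ 0} → ℕ)
    (hv : ∀ k : {k : Fin d // k.val ≠ 0}, ∑ p, v p k = n * j k.val)
    (α : Fin N → Fin n → Fin d) :
    bracketDicke d j N n v α =
      (∏ p, if ∀ k : {k : Fin d // k.val ≠ 0}, charVec (α p) k.val = v p k then 1 else 0) *
        if ∑ p, symbolIndicator j (α p) = dickeResidues n j then 1 else 0 := by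
  rw [bracketDicke, dickePow_eq_ite, Fintype.prod_boole, ite_zero_mul, one_mul]
  by_cases hα : ∀ p, ∀ k : {k : Fin d // k.val ≠ 0}, charVec (α p) k.val = v p k
  · have hsum (k : {k : Fin d // k.val ≠ 0}) : ∑ p, charVec (α p) k.val = n * j k.val := by
      simp only [hα, hv]
    simp only [if_pos hα, sum_symbolIndicator_eq_dickeResidues_iff hN α hsum]
  · rw [if_neg hα, if_neg hα]

theorem bracketDicke_rank_le_general (d : ℕ) (j : Fin d → ℕ) (N : ℕ) [NeZero N]
    (hN : N = ∑ i, j i) (n : ℕ) (v : Fin N → {k : Fin d // k.val ≠ 0} → ℕ)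
    (hv : ∀ k : {k : Fin d // k.val ≠ 0}, ∑ p, v p k = n * j k.val) :
    HasRankLE (∏ k : {k : Fin d // k.val ≠ 0}, (j k.val + 1) ^ n) (bracketDicke d j N n v) := by
  rw [← card_countResidues, funext (bracketDicke_eq_prod_mul_ite hN v hv)]
  exact (HasRankLE.ite_sum_eq (fun _ => symbolIndicator j) _).prod_mul
    fun p a => if ∀ k : {k : Fin d // k.val ≠ 0}, charVec a k.val = v p k then 1 else 0

end Dicke

/-- if Σ_p v_p = (n·j_2,…,n·j_d) then the tensor [v_1,…,v_N]_n has
tensor rank at most ∏_{k=2}^d (j_k + 1)^n. -/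
theorem bracketDicke_rank_le (d : ℕ) (hd : 2 ≤ d) (j : Fin d → ℕ) (hmono : Antitone j)
    (hpos : ∀ i, 1 ≤ j i) (N : ℕ) (hN : N = ∑ i, j i) (n : ℕ)
    (v : Fin N → {k : Fin d // k.val ≠ 0} → ℕ)
    (hv : ∀ k : {k : Fin d // k.val ≠ 0}, ∑ p, v p k = n * j k.val) :
    ∃ u : Fin (∏ k : {k : Fin d // k.val ≠ 0}, (j k.val + 1) ^ n) →
        Fin N → (Fin n → Fin d) → ℂ,
      ∀ α : Fin N → Fin n → Fin d,
        bracketDicke d j N n v α = ∑ t, ∏ p, u t p (α p) := by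
  have : NeZero N := ⟨by
    rw [hN]; exact (Finset.sum_pos (fun i _ => hpos i) ⟨⟨0, by omega⟩, Finset.mem_univ _⟩).ne'⟩
  exact bracketDicke_rank_le_general d j N hN n v hv
end

section
/- Let d ≥ 2 and j_1 ≥ ⋯ ≥ j_d ≥ 1 with N = j_1 + ⋯ + j_d, and let r = ⌊N/2⌋. Then the tensor rank of the Dicke tensor D(j_1,…,j_d) (as an N-party tensor) is at least the cardinality of the set {(β_1,…,β_d) ∈ ℕ^d : 0 ≤ β_i ≤ j_i for all i, and β_1 + ⋯ + β_d = r}. -/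
/-!
Flatten the tensor along a bipartition `S ∪ Sᶜ` of the parties: a decomposition into `r` product
terms factors the flattening through an `r`-dimensional space, so an identity submatrix of the
flattening has size at most `r`. For the Dicke tensor such a submatrix comes from choosing, for
each `β ≤ j` with `∑ i, β i = #S`, a word of type `j` whose restriction to `S` has type `β`:
replacing the `S`-part of one of these words by that of another one gives a word of type `j` only
if the two parts have the same type.
-/

open Finset

section Flattening

variable {P τ ι R : Type*} {I : P → Type*} [Fintype P] [DecidableEq P] [Fintype τ]

/-- The family `u` expresses the tensor `T` as a sum of product tensors indexed by `τ`, where party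
`p` has inputs in `I p`. The rank of `T` is the least possible cardinality of `τ`. -/
def IsTensorDecomposition [CommSemiring R] (T : (∀ p, I p) → R) (u : τ → ∀ p, I p → R) : Prop :=
  ∀ s, T s = ∑ t, ∏ p, u t p (s p)

/-- The flattening of `T` along the bipartition `S ∪ Sᶜ` of the parties. Rows and columns are both
indexed by inputs to all parties, but a row index only matters on `S` and a column index on `Sᶜ`;
the repeated rows and columns leave the rank unchanged. -/
def tensorFlattening (S : Finset P) (T : (∀ p, I p) → R) : Matrix (∀ p, I p) (∀ p, I p) R :=
  Matrix.of fun a b => T (S.piecewise a b)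

theorem IsTensorDecomposition.flattening_eq_mul [CommSemiring R] {T : (∀ p, I p) → R}
    {u : τ → ∀ p, I p → R} (hu : IsTensorDecomposition T u) (S : Finset P) :
    tensorFlattening S T =
      (Matrix.of fun a t => ∏ p ∈ S, u t p (a p)) *
        (Matrix.of fun t b => ∏ p ∈ Sᶜ, u t p (b p)) := by
  ext a b
  simp only [tensorFlattening, Matrix.mul_apply, Matrix.of_apply, hu (S.piecewise a b)]
  refine sum_congr rfl fun t _ => ?_
  rw [← prod_mul_prod_compl S]
  congr 1
  · exact prod_congr rfl fun p hp => by rw [piecewise_eq_of_mem _ _ _ hp]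
  · exact prod_congr rfl fun p hp => by rw [piecewise_eq_of_notMem _ _ _ (mem_compl.1 hp)]

theorem IsTensorDecomposition.card_le_of_submatrix_eq_one [CommRing R] [Nontrivial R] [Fintype ι]
    [DecidableEq ι] {T : (∀ p, I p) → R} {u : τ → ∀ p, I p → R} (hu : IsTensorDecomposition T u)
    {S : Finset P} {a b : ι → ∀ p, I p} (hab : (tensorFlattening S T).submatrix a b = 1) :
    Fintype.card ι ≤ Fintype.card τ := by
  rw [hu.flattening_eq_mul S, Matrix.submatrix_mul _ _ a id b Function.bijective_id] at hab
  calc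
    Fintype.card ι = (1 : Matrix ι ι R).rank := Matrix.rank_one.symm
    _ ≤ Fintype.card τ := hab ▸ (Matrix.rank_mul_le_left _ _).trans (Matrix.rank_le_card_width _)

end Flattening

section Words

variable {P α : Type*} [Fintype P] [DecidableEq α]

theorem card_filter_piecewise_eq [DecidableEq P] (S : Finset P) (v w : P → α) (i : α) :
    #{p | S.piecewise v w p = i} = #{p ∈ S | v p = i} + #{p ∈ Sᶜ | w p = i} := by
  simp only [card_filter]
  rw [← sum_add_sum_compl S]
  congr 1
  · exact sum_congr rfl fun p hp => by rw [piecewise_eq_of_mem _ _ _ hp]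
  · exact sum_congr rfl fun p hp => by rw [piecewise_eq_of_notMem _ _ _ (mem_compl.1 hp)]

theorem card_filter_eq_add_compl [DecidableEq P] (S : Finset P) (w : P → α) (i : α) :
    #{p | w p = i} = #{p ∈ S | w p = i} + #{p ∈ Sᶜ | w p = i} := by
  simpa only [piecewise_same] using card_filter_piecewise_eq S w w i

variable [Fintype α]

theorem exists_word_of_sum_eq_card {β : α → ℕ} (hβ : ∑ i, β i = Fintype.card P) :
    ∃ w : P → α, ∀ i, #{p | w p = i} = β i := by
  have e : P ≃ Σ i, Fin (β i) := Fintype.equivOfCardEq (by simp [hβ])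
  refine ⟨fun p => (e p).1, fun i => ?_⟩
  have fiber : {p // (e p).1 = i} ≃ Fin (β i) :=
    (e.subtypeEquiv fun _ => Iff.rfl).trans (Equiv.sigmaSubtype i)
  rw [← Fintype.card_subtype, Fintype.card_congr fiber, Fintype.card_fin]

theorem exists_word_of_le_of_sum_eq_card {S : Finset P} {j β : α → ℕ}
    (hj : ∑ i, j i = Fintype.card P) (hle : β ≤ j) (hβ : ∑ i, β i = #S) :
    ∃ w : P → α, (∀ i, #{p | w p = i} = j i) ∧ ∀ i, #{p ∈ S | w p = i} = β i := by
  classical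
  have hrest : ∑ i, (j i - β i) = Fintype.card {p // p ∉ S} := by
    rw [sum_tsub_distrib _ fun i _ => hle i, hj, hβ, Fintype.card_subtype_compl,
      Fintype.card_coe]
  obtain ⟨a, ha⟩ := exists_word_of_sum_eq_card (P := S) (hβ.trans (Fintype.card_coe S).symm)
  obtain ⟨b, hb⟩ := exists_word_of_sum_eq_card hrest
  let w : P → α := fun p => if hp : p ∈ S then a ⟨p, hp⟩ else b ⟨p, hp⟩
  have count_mem (i : α) : #{p ∈ S | w p = i} = β i := by
    rw [← ha i, card_filter, card_filter, ← sum_coe_sort S]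
    exact sum_congr rfl fun p _ => by simp [w]
  have count_compl (i : α) : #{p ∈ Sᶜ | w p = i} = j i - β i := by
    rw [← hb i, card_filter, card_filter, sum_subtype Sᶜ fun _ => mem_compl]
    exact sum_congr rfl fun p _ => by simp [w, p.2]
  refine ⟨w, fun i => ?_, count_mem⟩
  rw [card_filter_eq_add_compl S, count_mem, count_compl, Nat.add_sub_cancel' (hle i)]

end Words

section DickeTensor

variable {P α R : Type*} [Fintype P] [Fintype α] [DecidableEq α]

/-- The Dicke tensor of type `j` with parties `P`, symbols `α` and entries in `R`: the indicator of
the words `P → α` in which each symbol `i` occurs `j i` times. -/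
def dickeTensor (R : Type*) [Zero R] [One R] (j : α → ℕ) (s : P → α) : R :=
  if ∀ i, #{p | s p = i} = j i then 1 else 0

theorem Dicke_eq_dickeTensor (d : ℕ) (j : Fin d → ℕ) (N : ℕ) :
    Dicke d j N = dickeTensor ℂ j := by
  -- The two conditionals carry different decidability instances.
  unfold Dicke dickeTensor
  congr!

theorem dickeTensor_piecewise [DecidableEq P] [Zero R] [One R] (S : Finset P) {j : α → ℕ}
    (v : P → α) {w : P → α} (hw : ∀ i, #{p | w p = i} = j i) :
    dickeTensor R j (S.piecewise v w) =
      if ∀ i, #{p ∈ S | v p = i} = #{p ∈ S | w p = i} then 1 else 0 := by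
  simp only [dickeTensor, card_filter_piecewise_eq, ← hw, card_filter_eq_add_compl S w,
    Nat.add_right_cancel_iff]

theorem Dicke_rank_ge_general [CommRing R] [Nontrivial R] {τ : Type*} [Fintype τ] {j : α → ℕ}
    (hj : ∑ i, j i = Fintype.card P) {u : τ → P → α → R}
    (hu : IsTensorDecomposition (dickeTensor R j) u) (S : Finset P) :
    #{β ∈ Fintype.piFinset fun i => range (j i + 1) | ∑ i, β i = #S} ≤ Fintype.card τ := by
  classical
  set B := {β ∈ Fintype.piFinset fun i => range (j i + 1) | ∑ i, β i = #S}
  have exists_word (β : B) :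
      ∃ w : P → α, (∀ i, #{p | w p = i} = j i) ∧ ∀ i, #{p ∈ S | w p = i} = β.1 i := by
    obtain ⟨hβ, hsum⟩ := mem_filter.1 β.2
    have hle : β.1 ≤ j := fun i => Nat.lt_succ_iff.1 (mem_range.1 (Fintype.mem_piFinset.1 hβ i))
    exact exists_word_of_le_of_sum_eq_card hj hle hsum
  choose w hw hwS using exists_word
  have hone : (tensorFlattening S (dickeTensor R j)).submatrix w w = 1 := by
    ext β γ
    simp only [tensorFlattening, Matrix.submatrix_apply, Matrix.of_apply, Matrix.one_apply,
      dickeTensor_piecewise S _ (hw γ), hwS, Subtype.ext_iff, funext_iff]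
  simpa only [Fintype.card_coe] using hu.card_le_of_submatrix_eq_one hone

end DickeTensor

/-- the tensor rank of D(j_1,…,j_d) is at least the number of tuples
(β_1,…,β_d) ∈ ℕ^d with β_i ≤ j_i for all i and Σ β_i = ⌊N/2⌋: any rank-r decomposition
of the Dicke tensor satisfies r ≥ that cardinality. -/
theorem Dicke_rank_ge (d : ℕ) (hd : 2 ≤ d) (j : Fin d → ℕ) (hmono : Antitone j)
    (hpos : ∀ i, 1 ≤ j i) (N : ℕ) (hN : N = ∑ i, j i)
    (r : ℕ) (u : Fin r → Fin N → Fin d → ℂ)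
    (hu : ∀ s : Fin N → Fin d, Dicke d j N s = ∑ t, ∏ p, u t p (s p)) :
    ((Fintype.piFinset fun i : Fin d => Finset.range (j i + 1)).filter
        fun β => ∑ i, β i = N / 2).card ≤ r := by
  have hdec : IsTensorDecomposition (dickeTensor ℂ j) u := Dicke_eq_dickeTensor d j N ▸ hu
  have hcard : #{p : Fin N | p < N / 2} = N / 2 := by
    rw [Fin.card_filter_val_lt, min_eq_right (N.div_le_self 2)]
  simpa only [hcard, Fintype.card_fin] using
    Dicke_rank_ge_general (by rw [← hN, Fintype.card_fin]) hdec {p : Fin N | p < N / 2}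
end

section
/- Let d ≥ 2 and j_1 ≥ ⋯ ≥ j_d ≥ 1 with N = j_1 + ⋯ + j_d, and suppose j_1 ≥ j_2 + ⋯ + j_d. Then for every n ≥ 1, the tensor rank of D(j_1,…,j_d)^{⊗n} is at least ∏_{i=2}^d (j_i + 1)^n. -/
/-!
Splitting the parties into `s` and its complement turns a tensor into a matrix, and a decomposition
into `r` product terms factors this flattening through an `r`-dimensional space. An entry of the
flattening of the Dicke tensor is `1` exactly when the numbers `k i` of occurrences of each symbol
`i` inside `s` and those outside `s` add up to `j i`. Hence it contains an identity matrix indexed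
by the vectors `k ≤ j` of total `#s`, and the flattening of the `n`-th power contains the `n`-th
Kronecker power of that identity matrix. When `∑_{i ≠ z} j i ≤ #s ≤ j z`, the entries of such a `k`
away from `z` are arbitrary and determine `k z`, so there are `∏_{i ≠ z} (j i + 1)` of them.
-/

section

open Finset

section Flattening

variable {ι R : Type*} [DecidableEq ι] {I : ι → Type*}

/-- The matrix of the tensor `T` with respect to the bipartition of the parties into `s` and its
complement. Rows and columns are indexed by complete inputs; a row only matters through its
restriction to `s`, a column only through its restriction to the complement of `s`. -/
def flattening (s : Finset ι) (T : (∀ p, I p) → R) : Matrix (∀ p, I p) (∀ p, I p) R :=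
  .of fun x y => T (s.piecewise x y)

theorem rank_flattening_le [Fintype ι] [CommSemiring R] [StrongRankCondition R] [∀ p, Fintype (I p)]
    {τ : Type*} [Fintype τ] (s : Finset ι) {T : (∀ p, I p) → R} (u : τ → ∀ p, I p → R)
    (hT : ∀ x, T x = ∑ t, ∏ p, u t p (x p)) : (flattening s T).rank ≤ Fintype.card τ := by
  let P : Matrix (∀ p, I p) τ R := .of fun x t => ∏ p ∈ s, u t p (x p)
  let Q : Matrix τ (∀ p, I p) R := .of fun t y => ∏ p ∈ sᶜ, u t p (y p)
  have prod_split (t : τ) (x y : ∀ p, I p) :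
      ∏ p, u t p (s.piecewise x y p) = P x t * Q t y := by
    rw [← prod_mul_prod_compl s]
    congr 1
    · exact prod_congr rfl fun p hp => by rw [piecewise_eq_of_mem _ _ _ hp]
    · exact prod_congr rfl fun p hp => by rw [piecewise_eq_of_notMem _ _ _ (mem_compl.mp hp)]
  have factorization : flattening s T = P * Q := by
    ext x y
    simp only [flattening, Matrix.of_apply, Matrix.mul_apply, hT, prod_split]
  rw [factorization]
  exact (Matrix.rank_mul_le_left P Q).trans (Matrix.rank_le_card_width P)

/-- The `m`-th tensor power of `T`, with the copies indexed by a type `m`: each party receives one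
input for every copy, and the entries of the copies are multiplied. -/
def tensorPow [CommMonoid R] (m : Type*) [Fintype m] (T : (∀ p, I p) → R) : (∀ p, m → I p) → R :=
  fun α => ∏ t, T fun p => α p t

theorem submatrix_flattening_tensorPow_eq_one [CommSemiring R] {m κ : Type*} [Fintype m]
    [DecidableEq κ] (s : Finset ι) {T : (∀ p, I p) → R} {x y : κ → ∀ p, I p}
    (hT : (flattening s T).submatrix x y = 1) :
    (flattening s (tensorPow m T)).submatrix
      (fun (k : m → κ) p t => x (k t) p) (fun (l : m → κ) p t => y (l t) p) = 1 := by
  ext k l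
  have entry (t : m) : T (s.piecewise (x (k t)) (y (l t))) = if k t = l t then 1 else 0 :=
    (congr_fun₂ hT (k t) (l t)).trans Matrix.one_apply
  have slice (t : m) : (fun p => s.piecewise (fun p t => x (k t) p) (fun p t => y (l t) p) p t) =
      s.piecewise (x (k t)) (y (l t)) := by
    ext p
    by_cases hp : p ∈ s <;> simp [hp]
  simp only [flattening, tensorPow, Matrix.submatrix_apply, Matrix.of_apply, slice, entry,
    prod_ite_zero, prod_const_one, Matrix.one_apply, funext_iff, mem_univ, true_implies]

theorem card_pow_le_rank_flattening_tensorPow [CommSemiring R] [StrongRankCondition R] [Fintype ι]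
    [∀ p, Fintype (I p)] {m κ : Type*} [Fintype m] [DecidableEq m] [Fintype κ] [DecidableEq κ]
    (s : Finset ι) {T : (∀ p, I p) → R} {x y : κ → ∀ p, I p}
    (hT : (flattening s T).submatrix x y = 1) :
    Fintype.card κ ^ Fintype.card m ≤ (flattening s (tensorPow m T)).rank := by
  have rank_le := (flattening s (tensorPow m T)).rank_submatrix_le
    (fun (k : m → κ) p t => x (k t) p) (fun (l : m → κ) p t => y (l t) p)
  rwa [submatrix_flattening_tensorPow_eq_one s hT, Matrix.rank_one, Fintype.card_fun] at rank_le

end Flattening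

section Words

variable {ι σ : Type*} [DecidableEq σ]

theorem card_filter_piecewise [Fintype ι] [DecidableEq ι] (s : Finset ι) (f g : ι → σ) (i : σ) :
    #{p | s.piecewise f g p = i} = #{p ∈ s | f p = i} + #{p ∈ sᶜ | g p = i} := by
  simp only [card_filter, ← sum_add_sum_compl s]
  congr 1
  · exact sum_congr rfl fun p hp => by rw [piecewise_eq_of_mem _ _ _ hp]
  · exact sum_congr rfl fun p hp => by rw [piecewise_eq_of_notMem _ _ _ (mem_compl.mp hp)]

theorem exists_card_filter_eq [Fintype σ] [Nonempty (ι → σ)] (s : Finset ι) (k : σ → ℕ)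
    (hk : ∑ i, k i = #s) : ∃ f : ι → σ, ∀ i, #{p ∈ s | f p = i} = k i := by
  classical
  induction s using Finset.induction_on generalizing k with
  | empty =>
    obtain ⟨f⟩ := ‹Nonempty (ι → σ)›
    exact ⟨f, by simpa [eq_comm] using hk⟩
  | insert q s hq ih =>
    rw [card_insert_of_notMem hq] at hk
    obtain ⟨a, -, ha⟩ : ∃ a ∈ univ, k a ≠ 0 := exists_ne_zero_of_sum_ne_zero (by omega)
    obtain ⟨f, hf⟩ := ih (Function.update k a (k a - 1)) (by
      rw [sum_update_of_mem (mem_univ a), sdiff_singleton_eq_erase]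
      have := add_sum_erase univ k (mem_univ a)
      omega)
    refine ⟨Function.update f q a, fun i => ?_⟩
    have off_q : {p ∈ s | Function.update f q a p = i} = {p ∈ s | f p = i} :=
      filter_congr fun p hp => by rw [Function.update_of_ne (ne_of_mem_of_not_mem hp hq)]
    rw [filter_insert, Function.update_self, off_q]
    obtain rfl | hi := eq_or_ne a i
    · rw [if_pos rfl, card_insert_of_notMem (by simp [hq]), hf, Function.update_self]
      omega
    · rw [if_neg hi, hf, Function.update_of_ne hi.symm]

end Words

section BoundedCompositions

variable {σ : Type*} [Fintype σ] [DecidableEq σ]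

/-- The weak compositions of `a` with parts indexed by `σ`, the part at `i` being at most `j i`:
the possible numbers of occurrences of the symbols in `a` of the places of a word in which each
symbol `i` occurs `j i` times. -/
def boundedCompositions (j : σ → ℕ) (a : ℕ) : Finset (σ → ℕ) :=
  {k ∈ Iic j | ∑ i, k i = a}

theorem mem_boundedCompositions {j k : σ → ℕ} {a : ℕ} :
    k ∈ boundedCompositions j a ↔ k ≤ j ∧ ∑ i, k i = a := by
  rw [boundedCompositions, mem_filter, mem_Iic]

theorem card_Iic_update_zero (j : σ → ℕ) (z : σ) :
    #(Iic (Function.update j z 0)) = ∏ i ∈ univ.erase z, (j i + 1) := by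
  simp only [Pi.card_Iic, Nat.card_Iic]
  rw [← mul_prod_erase univ _ (mem_univ z), Function.update_self, zero_add, one_mul]
  exact prod_congr rfl fun i hi => by rw [Function.update_of_ne (ne_of_mem_erase hi)]

theorem card_boundedCompositions_of_sum_erase_le {j : σ → ℕ} {z : σ} {a : ℕ}
    (h_rest : ∑ i ∈ univ.erase z, j i ≤ a) (hz : a ≤ j z) :
    #(boundedCompositions j a) = ∏ i ∈ univ.erase z, (j i + 1) := by
  rw [← card_Iic_update_zero]
  refine card_nbij' (fun k => Function.update k z 0)
    (fun l => Function.update l z (a - ∑ i ∈ univ.erase z, l i)) ?_ ?_ ?_ ?_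
  · intro k hk
    obtain ⟨k_le, -⟩ := mem_boundedCompositions.mp hk
    exact mem_Iic.mpr (update_le_update_iff.mpr ⟨le_rfl, fun i _ => k_le i⟩)
  · intro l hl
    obtain ⟨-, l_le⟩ := le_update_iff.mp (mem_Iic.mp hl)
    have sum_le : ∑ i ∈ univ.erase z, l i ≤ a :=
      (sum_le_sum fun i hi => l_le i (ne_of_mem_erase hi)).trans h_rest
    refine mem_boundedCompositions.mpr ⟨?_, ?_⟩
    · exact update_le_iff.mpr ⟨(Nat.sub_le _ _).trans hz, l_le⟩
    · rw [sum_update_of_mem (mem_univ z), sdiff_singleton_eq_erase, Nat.sub_add_cancel sum_le]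
  · intro k hk
    obtain ⟨-, sum_k⟩ := mem_boundedCompositions.mp hk
    have k_z : a - ∑ i ∈ univ.erase z, k i = k z := by
      rw [← sum_k, ← add_sum_erase univ k (mem_univ z), Nat.add_sub_cancel]
    simp only [sum_update_of_notMem (notMem_erase z univ), Function.update_idem, k_z,
      Function.update_eq_self]
  · intro l hl
    obtain ⟨l_z, -⟩ := le_update_iff.mp (mem_Iic.mp hl)
    simp only [Function.update_idem, ← Nat.le_zero.mp l_z, Function.update_eq_self]

end BoundedCompositions

theorem exists_submatrix_flattening_Dicke_eq_one {d N : ℕ} {j : Fin d → ℕ} (hN : N = ∑ i, j i)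
    (s : Finset (Fin N)) :
    ∃ x y : boundedCompositions j #s → Fin N → Fin d,
      (flattening s (Dicke d j N)).submatrix x y = 1 := by
  have : Nonempty (Fin N → Fin d) := by
    rcases d with _ | d
    · exact hN ▸ ⟨Fin.elim0⟩
    · infer_instance
  have le_j (k : boundedCompositions j #s) (i : Fin d) : k.1 i ≤ j i :=
    (mem_boundedCompositions.mp k.2).1 i
  have sum_inside (k : boundedCompositions j #s) : ∑ i, k.1 i = #s :=
    (mem_boundedCompositions.mp k.2).2
  have sum_outside (k : boundedCompositions j #s) : ∑ i, (j i - k.1 i) = #sᶜ := by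
    rw [sum_tsub_distrib _ fun i _ => le_j k i, sum_inside, card_compl, Fintype.card_fin, ← hN]
  choose x hx using fun k => exists_card_filter_eq s k.1 (sum_inside k)
  choose y hy using fun k => exists_card_filter_eq sᶜ (fun i => j i - k.1 i) (sum_outside k)
  refine ⟨x, y, ?_⟩
  ext k l
  have counts_match_iff : (∀ i, k.1 i + (j i - l.1 i) = j i) ↔ k = l := by
    rw [Subtype.ext_iff, funext_iff]
    exact forall_congr' fun i => by have := le_j l i; omega
  simp only [flattening, Matrix.submatrix_apply, Matrix.of_apply, Dicke, card_filter_piecewise, hx,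
    hy, counts_match_iff, Matrix.one_apply]

theorem DickePow_rank_ge_general (d : ℕ) (j : Fin d → ℕ) (N : ℕ) (hN : N = ∑ i, j i) (n : ℕ)
    (r : ℕ) (u : Fin r → Fin N → (Fin n → Fin d) → ℂ)
    (hu : ∀ α : Fin N → Fin n → Fin d, DickePow d j N n α = ∑ t, ∏ p, u t p (α p))
    (a : ℕ) (ha : a ≤ N) : #(boundedCompositions j a) ^ n ≤ r := by
  obtain ⟨s, -, rfl⟩ : ∃ s ⊆ (univ : Finset (Fin N)), #s = a :=
    exists_subset_card_eq (by simpa using ha)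
  obtain ⟨x, y, hxy⟩ := exists_submatrix_flattening_Dicke_eq_one hN s
  calc
    #(boundedCompositions j #s) ^ n
      = Fintype.card (boundedCompositions j #s) ^ Fintype.card (Fin n) := by
        rw [Fintype.card_coe, Fintype.card_fin]
    _ ≤ (flattening s (tensorPow (Fin n) (Dicke d j N))).rank :=
        card_pow_le_rank_flattening_tensorPow s hxy
    _ ≤ Fintype.card (Fin r) := rank_flattening_le s u hu
    _ = r := Fintype.card_fin r

end

/-- for d ≥ 2, j_1 ≥ ⋯ ≥ j_d ≥ 1, N = Σ j_i with j_1 ≥ j_2 + ⋯ + j_d,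
and every n ≥ 1, the tensor rank of D(j_1,…,j_d)^{⊗n} is at least ∏_{i=2}^d (j_i + 1)^n:
any rank-r decomposition satisfies r ≥ that product. -/
theorem DickePow_rank_ge (d : ℕ) (hd : 2 ≤ d) (j : Fin d → ℕ) (hmono : Antitone j)
    (hpos : ∀ i, 1 ≤ j i) (N : ℕ) (hN : N = ∑ i, j i)
    (hbig : ∑ i ∈ Finset.univ.erase (⟨0, by omega⟩ : Fin d), j i ≤ j ⟨0, by omega⟩)
    (n : ℕ) (hn : 1 ≤ n)
    (r : ℕ) (u : Fin r → Fin N → (Fin n → Fin d) → ℂ)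
    (hu : ∀ α : Fin N → Fin n → Fin d, DickePow d j N n α = ∑ t, ∏ p, u t p (α p)) :
    ∏ i ∈ Finset.univ.erase (⟨0, by omega⟩ : Fin d), (j i + 1) ^ n ≤ r := by
  rw [Finset.prod_pow, ← card_boundedCompositions_of_sum_erase_le le_rfl hbig]
  exact DickePow_rank_ge_general d j N hN n r u hu _
    (hN ▸ Finset.sum_le_sum_of_subset (Finset.subset_univ _))
end

section
/- For every N ≥ 1, the tensor rank of the permutation tensor D(1,…,1) (with N parties) is at least the binomial coefficient C(N, ⌊N/2⌋); that is, if vectors u_{t,p} : {1,…,N} → ℂ (1 ≤ t ≤ r, 1 ≤ p ≤ N) satisfy, for all (s_1,…,s_N) ∈ ({1,…,N})^N, Σ_{t=1}^r ∏_{p=1}^N u_{t,p}(s_p) = 1 if (s_1,…,s_N) is a permutation of (1,…,N) and = 0 otherwise, then r ≥ C(N, ⌊N/2⌋). -/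
/-!
Split the parties into a set `P` of size `k` and its complement. A decomposition with `r` terms
factors every matrix of entries of the tensor across this cut through an `r`-element index set.
For the permutation tensor, choose for each `k`-element set `S` a permutation mapping `P` onto `S`.
Following the permutation of `S` on `P` and that of `S'` off `P` gives a bijection exactly when
`S = S'`, so these permutations label an identity submatrix of size `C(N, k)`,
which can factor only if `C(N, k) ≤ r`.
-/

open Finset

theorem card_le_card_of_matrix_mul_eq_one {R m n : Type*} [Semiring R] [RankCondition R]
    [Fintype m] [DecidableEq m] [Fintype n] {A : Matrix m n R} {B : Matrix n m R}
    (h : A * B = 1) : Fintype.card m ≤ Fintype.card n :=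
  card_le_of_surjective R B.vecMulLinear (Matrix.vecMul_surjective_iff_exists_left_inverse.2 ⟨A, h⟩)

section Cut

variable {R ι τ m n : Type*} {α : ι → Type*} [DecidableEq ι]

/-- The matrix of entries of the tensor `T` across the cut `P` against its complement: rows follow
`x i` on `P` and columns follow `y j` off `P`. It is a submatrix of the flattening of `T` along `P`,
with rows and columns labelled by full inputs so that no restriction to `P` has to be formed. -/
def cutMatrix (T : (∀ p, α p) → R) (P : Finset ι) (x : m → ∀ p, α p) (y : n → ∀ p, α p) :
    Matrix m n R :=
  .of fun i j => T (P.piecewise (x i) (y j))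

variable [CommSemiring R] [Fintype ι] [Fintype τ]

theorem prod_apply_piecewise (f : ∀ p, α p → R) (P : Finset ι) (x y : ∀ p, α p) :
    ∏ p, f p (P.piecewise x y p) = (∏ p ∈ P, f p (x p)) * ∏ p ∈ Pᶜ, f p (y p) := by
  rw [← prod_mul_prod_compl P]
  congr 1 <;> refine prod_congr rfl fun p hp => ?_
  · rw [piecewise_eq_of_mem _ _ _ hp]
  · rw [piecewise_eq_of_notMem _ _ _ (mem_compl.1 hp)]

theorem cutMatrix_sum_prod (u : τ → ∀ p, α p → R) (P : Finset ι)
    (x : m → ∀ p, α p) (y : n → ∀ p, α p) :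
    cutMatrix (fun s => ∑ t, ∏ p, u t p (s p)) P x y =
      Matrix.of (fun i t => ∏ p ∈ P, u t p (x i p)) *
        Matrix.of (fun t j => ∏ p ∈ Pᶜ, u t p (y j p)) := by
  ext i j
  simp only [cutMatrix, Matrix.of_apply, Matrix.mul_apply, prod_apply_piecewise]

theorem card_le_card_of_cutMatrix_eq_one [RankCondition R] [Fintype m] [DecidableEq m]
    {T : (∀ p, α p) → R} {u : τ → ∀ p, α p → R} (hu : ∀ s, ∑ t, ∏ p, u t p (s p) = T s)
    {P : Finset ι} {x y : m → ∀ p, α p} (h : cutMatrix T P x y = 1) :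
    Fintype.card m ≤ Fintype.card τ := by
  rw [← funext hu, cutMatrix_sum_prod] at h
  exact card_le_card_of_matrix_mul_eq_one h

end Cut

theorem bijective_piecewise_iff_image_eq {α β : Type*} {f g : α → β} (hf : f.Bijective)
    (hg : g.Bijective) (s : Set α) [∀ a, Decidable (a ∈ s)] :
    (s.piecewise f g).Bijective ↔ f '' s = g '' s := by
  have injective_iff : (s.piecewise f g).Injective ↔ Disjoint (f '' s) (g '' sᶜ) := by
    simp only [Set.injective_piecewise_iff, hf.injective.injOn, hg.injective.injOn, true_and,
      Set.disjoint_iff_forall_ne, Set.forall_mem_image, Set.mem_compl_iff]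
  have surjective_iff : (s.piecewise f g).Surjective ↔ Codisjoint (f '' s) (g '' sᶜ) := by
    rw [← Set.range_eq_univ, Set.range_piecewise, codisjoint_iff]
    rfl
  rw [Function.Bijective, injective_iff, surjective_iff, ← isCompl_iff, Set.image_compl_eq hg,
    ← eq_compl_iff_isCompl, compl_compl]

theorem exists_perm_image_eq {ι : Type*} {k : ℕ} (P S : Set.powersetCard ι k) :
    ∃ σ : Equiv.Perm ι, σ '' (P : Set ι) = S := by
  classical
  have := Set.powersetCard.isPretransitive (α := ι) (n := k)
  obtain ⟨σ, rfl⟩ := MulAction.exists_smul_eq (Equiv.Perm ι) P S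
  refine ⟨σ, ?_⟩
  simp only [← Set.powersetCard.coe_coe, Set.powersetCard.coe_smul, coe_smul_finset]
  rfl

theorem cutMatrix_bijective_eq_one {R ι m : Type*} [Zero R] [One R] [Fintype ι] [DecidableEq ι]
    [DecidableEq m] {P : Finset ι} {σ : m → Equiv.Perm ι}
    (hσ : Function.Injective fun i => σ i '' (P : Set ι)) :
    cutMatrix (fun s : ι → ι => if s.Bijective then (1 : R) else 0) P
      (fun i => σ i) (fun i => σ i) = 1 := by
  ext i j
  have bijective_iff : (P.piecewise (σ i) (σ j)).Bijective ↔ i = j := by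
    rw [← piecewise_coe, bijective_piecewise_iff_image_eq (σ i).bijective (σ j).bijective]
    exact hσ.eq_iff
  simp only [cutMatrix, Matrix.of_apply, bijective_iff, Matrix.one_apply]

theorem permutation_tensor_rank_ge_general {R ι τ : Type*} [CommSemiring R] [Nontrivial R]
    [Fintype ι] [DecidableEq ι] [Fintype τ] (u : τ → ι → ι → R)
    (hu : ∀ s : ι → ι, (∑ t, ∏ p, u t p (s p)) = if Function.Bijective s then 1 else 0) (k : ℕ) :
    (Fintype.card ι).choose k ≤ Fintype.card τ := by
  rw [← Nat.card_eq_fintype_card, ← Set.powersetCard.card, Nat.card_eq_fintype_card]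
  rcases isEmpty_or_nonempty (Set.powersetCard ι k) with _ | ⟨⟨P⟩⟩
  · simp
  choose σ hσ using exists_perm_image_eq P
  have image_injective : Function.Injective fun S => σ S '' (P : Set ι) := by
    simpa only [hσ] using SetLike.coe_injective
  exact card_le_card_of_cutMatrix_eq_one hu (cutMatrix_bijective_eq_one (P := P) image_injective)

/-- any rank-r decomposition of the N-party permutation tensor
D(1,…,1) (entry 1 at (s_1,…,s_N) iff p ↦ s_p is a bijection of {1,…,N}, and 0
otherwise) satisfies r ≥ C(N, ⌊N/2⌋). -/
theorem permutation_tensor_rank_ge (N : ℕ) (hN : 1 ≤ N) (r : ℕ)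
    (u : Fin r → Fin N → Fin N → ℂ)
    (hu : ∀ s : Fin N → Fin N,
      (∑ t, ∏ p, u t p (s p)) = if Function.Bijective s then 1 else 0) :
    N.choose (N / 2) ≤ r := by
  simpa using permutation_tensor_rank_ge_general u hu (N / 2)
end

section
/- Let N ≥ 1 and suppose complex coefficients a^{(j)}_{i,k} (1 ≤ i,k ≤ N, 1 ≤ j ≤ K) satisfy, for every N×N complex matrix X, perm(X) = Σ_{j=1}^{K} ∏_{i=1}^{N} (Σ_{k=1}^{N} a^{(j)}_{i,k} X_{i,k}). Then K ≥ C(N, ⌊N/2⌋), where C(N, ⌊N/2⌋) is the central binomial coefficient. -/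
/-- The permanent of an N×N complex matrix. -/
noncomputable def perm (N : ℕ) (X : Matrix (Fin N) (Fin N) ℂ) : ℂ :=
  ∑ σ : Equiv.Perm (Fin N), ∏ i, X i (σ i)

/-!
Evaluated at the `0`-`1` matrix with ones at the positions `(i, f i)`, the decomposition says that
`∑ j, ∏ i, a j i (f i)` is `1` if `f` is a bijection and `0` otherwise. Fix a set `A` of `⌊N/2⌋`
rows and, for each set `S` of `⌊N/2⌋` columns, a permutation `p S` mapping `A` onto `S`. The map
equal to `p S` on `A` and to `p T` off `A` is a bijection exactly when `S = T`. Splitting each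
product into the rows in `A` and the rows outside `A` thus factors the identity matrix of size
`C(N, ⌊N/2⌋)` through a free module of rank `K`.
-/

open Function Matrix
open scoped Pointwise

theorem card_le_card_of_mul_eq_one {R m n : Type*} [Semiring R] [RankCondition R] [Fintype m]
    [Fintype n] [DecidableEq m] {U : Matrix m n R} {V : Matrix n m R} (hUV : U * V = 1) :
    Fintype.card m ≤ Fintype.card n :=
  card_le_of_surjective R V.vecMulLinear fun v ↦
    ⟨v ᵥ* U, by rw [vecMulLinear_apply, vecMul_vecMul, hUV, vecMul_one]⟩

theorem bijective_piecewise_iff_image_eq_image {α β : Type*} {f g : α → β} (hf : Injective f)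
    (hg : Bijective g) (s : Set α) [∀ x, Decidable (x ∈ s)] :
    Bijective (s.piecewise f g) ↔ f '' s = g '' s := by
  have injective_iff : Injective (s.piecewise f g) ↔ Disjoint (f '' s) (g '' sᶜ) := by
    simp [Set.injective_piecewise_iff, Set.disjoint_iff_forall_ne, hf.injOn, hg.injective.injOn]
  have surjective_iff : Surjective (s.piecewise f g) ↔ Codisjoint (f '' s) (g '' sᶜ) := by
    rw [← Set.range_eq_univ, Set.range_piecewise, codisjoint_iff]
    rfl
  rw [Bijective, injective_iff, surjective_iff, ← isCompl_iff, Set.image_compl_eq hg,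
    ← eq_compl_iff_isCompl, compl_compl]

theorem permanent_one_submatrix {R n : Type*} [CommSemiring R] [Fintype n] [DecidableEq n]
    (f : n → n) [Decidable (Bijective f)] :
    ((1 : Matrix n n R).submatrix f id).permanent = if Bijective f then 1 else 0 := by
  split_ifs with hf
  · exact (permanent_permute_cols (Equiv.ofBijective f hf) 1).trans permanent_one
  · refine Finset.sum_eq_zero fun σ _ ↦ ?_
    obtain ⟨i, hi⟩ : ∃ i, f (σ i) ≠ i := by
      by_contra! h
      exact hf (Finite.surjective_iff_bijective.mp fun i ↦ ⟨σ i, h i⟩)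
    exact Finset.prod_eq_zero (Finset.mem_univ i) (one_apply_ne hi)

theorem perm_eq_permanent (N : ℕ) (X : Matrix (Fin N) (Fin N) ℂ) : perm N X = X.permanent :=
  permanent_transpose X

section Decomposition

variable {R n ι κ : Type*} [CommSemiring R]

/-- The products of the coefficients `a j i (f u i)` over the rows `i` in `s`, arranged as a matrix
indexed by `u` and `j`. For complementary sets of rows these are the two factors of a flattening of
the tensor `∑ j, ⨂ i, a j i`, restricted to the coordinates selected by `f`. -/
def rowProd (a : ι → n → n → R) (s : Finset n) (f : κ → n → n) : Matrix κ ι R :=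
  of fun u j ↦ ∏ i ∈ s, a j i (f u i)

variable [Fintype n] [DecidableEq n] [Fintype ι] {a : ι → n → n → R}

theorem rowProd_mul_transpose_rowProd_compl_apply (s : Finset n) (f : κ → n → n) (u v : κ) :
    (rowProd a s f * (rowProd a sᶜ f)ᵀ) u v =
      ∑ j, ∏ i, a j i (s.piecewise (f u) (f v) i) := by
  refine Finset.sum_congr rfl fun j _ ↦ ?_
  rw [← Finset.prod_mul_prod_compl s]
  congr 1 <;> refine Finset.prod_congr rfl fun i hi ↦ ?_
  · rw [Finset.piecewise_eq_of_mem _ _ _ hi]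
  · rw [Finset.piecewise_eq_of_notMem _ _ _ (Finset.mem_compl.mp hi)]

theorem sum_prod_apply_eq_ite_bijective
    (ha : ∀ X : Matrix n n R, X.permanent = ∑ j, ∏ i, ∑ k, a j i k * X i k)
    (f : n → n) [Decidable (Bijective f)] :
    ∑ j, ∏ i, a j i (f i) = if Bijective f then 1 else 0 := by
  rw [← permanent_one_submatrix, ha]
  simp [one_apply]

theorem rowProd_mul_transpose_rowProd_compl_eq_one [DecidableEq κ]
    (ha : ∀ X : Matrix n n R, X.permanent = ∑ j, ∏ i, ∑ k, a j i k * X i k)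
    {s : Finset n} {p : κ → Equiv.Perm n} (hp : Injective fun u ↦ p u '' s) :
    rowProd a s (fun u ↦ p u) * (rowProd a sᶜ fun u ↦ p u)ᵀ = 1 := by
  classical
  ext u v
  have bijective_iff : Bijective (s.piecewise (p u) (p v)) ↔ u = v := by
    rw [← Finset.piecewise_coe,
      bijective_piecewise_iff_image_eq_image (p u).injective (p v).bijective]
    exact hp.eq_iff
  rw [rowProd_mul_transpose_rowProd_compl_apply, sum_prod_apply_eq_ite_bijective ha, one_apply]
  simp only [bijective_iff]

theorem permanent_decomposition_ge_general [Nontrivial R]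
    (ha : ∀ X : Matrix n n R, X.permanent = ∑ j, ∏ i, ∑ k, a j i k * X i k) :
    (Fintype.card n).choose (Fintype.card n / 2) ≤ Fintype.card ι := by
  obtain ⟨A, -, hA⟩ := Finset.exists_subset_card_eq (Nat.div_le_self (Finset.univ (α := n)).card 2)
  have transitive := Set.powersetCard.isPretransitive (α := n) (n := Fintype.card n / 2)
  choose p hp using transitive.exists_smul_eq ⟨A, hA⟩
  have smul_eq (S) : p S • A = S.val := congrArg Subtype.val (hp S)
  have image_injective : Injective fun S ↦ p S '' A := fun S T hST ↦ by
    rw [Subtype.ext_iff, ← smul_eq, ← smul_eq, ← Finset.coe_inj, Finset.coe_smul_finset,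
      Finset.coe_smul_finset]
    exact hST
  have card_le := card_le_card_of_mul_eq_one
    (rowProd_mul_transpose_rowProd_compl_eq_one ha image_injective)
  rwa [← Nat.card_eq_fintype_card, Set.powersetCard.card, Nat.card_eq_fintype_card] at card_le

end Decomposition

/-- if coefficients a⁽ʲ⁾_{i,k} give a decomposition of the permanent into
K products of row-wise linear forms, perm(X) = Σ_j ∏_i (Σ_k a⁽ʲ⁾_{i,k} X_{i,k}) for all X,
then K ≥ C(N, ⌊N/2⌋). -/
theorem permanent_decomposition_ge (N : ℕ) (hN : 1 ≤ N) (K : ℕ)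
    (a : Fin K → Fin N → Fin N → ℂ)
    (ha : ∀ X : Matrix (Fin N) (Fin N) ℂ,
      perm N X = ∑ j, ∏ i, ∑ k, a j i k * X i k) :
    N.choose (N / 2) ≤ K := by
  simpa only [Fintype.card_fin] using
    permanent_decomposition_ge_general fun X ↦ (perm_eq_permanent N X).symm.trans (ha X)
end
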